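/- Let ω and ν be radial weights such that P_ω : L^∞_ν̂ → H^∞_ν̂ is bounded. Then there exists a constant C = C(ω,ν) > 0 such that (ω/ν̂)_x ≤ C · ω_{2x} / ν̂(1 − 1/x) for all x ≥ 1. -/

import Mathlib

open MeasureTheory Set Complex
open scoped ENNReal

noncomputable section

/-- The open unit disc in the complex plane. -/
def unitDisc : Set ℂ := Metric.ball 0 1

/-- Tail integral `ω̂(r) = ∫_r^1 ω(s) ds`. -/
def tl (ω : ℝ → ℝ) (r : ℝ) : ℝ := ∫ s in r..1, ω s

/-- Moment `ω_x = ∫_0^1 s^x ω(s) ds` (real power in the exponent). -/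
def mom (ω : ℝ → ℝ) (x : ℝ) : ℝ := ∫ s in (0:ℝ)..1, s ^ x * ω s

/-- `ω` is a radial weight: nonnegative and integrable on `[0,1)`, with positive
tail integrals. -/
def IsRadialWeight (ω : ℝ → ℝ) : Prop :=
  (∀ s ∈ Ico (0:ℝ) 1, 0 ≤ ω s) ∧ IntegrableOn ω (Ico (0:ℝ) 1) ∧
    ∀ r ∈ Ico (0:ℝ) 1, 0 < tl ω r

/-- The upper doubling class `D̂`: `sup_{0≤r<1} ω̂(r)/ω̂((1+r)/2) < ∞`. -/
def Dhat (ω : ℝ → ℝ) : Prop :=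
  ∃ C : ℝ, ∀ r ∈ Ico (0:ℝ) 1, tl ω r ≤ C * tl ω ((1 + r) / 2)

/-- The class `Ď`: there are `K > 1`, `C > 1` with `ω̂(r) ≥ C ω̂(1 - (1-r)/K)`. -/
def Dcheck (ω : ℝ → ℝ) : Prop :=
  ∃ K C : ℝ, 1 < K ∧ 1 < C ∧ ∀ r ∈ Ico (0:ℝ) 1, C * tl ω (1 - (1 - r) / K) ≤ tl ω r

/-- The class `D = D̂ ∩ Ď`. -/
def DD (ω : ℝ → ℝ) : Prop := Dhat ω ∧ Dcheck ω

/-- The Bergman reproducing kernel `B^ω_z(ζ) = Σ_n (conj z · ζ)^n / (2 ω_{2n+1})`. -/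
def bKer (ω : ℝ → ℝ) (z ζ : ℂ) : ℂ :=
  ∑' n : ℕ, (starRingEnd ℂ z * ζ) ^ n / ((2 * mom ω (2 * (n : ℝ) + 1) : ℝ) : ℂ)

/-- The integrand of the Bergman projection. -/
def bInt (ω : ℝ → ℝ) (f : ℂ → ℂ) (z ζ : ℂ) : ℂ :=
  f ζ * starRingEnd ℂ (bKer ω z ζ) * ((ω ‖ζ‖ : ℝ) : ℂ)

/-- The Bergman projection `P_ω f(z) = ∫_𝔻 f(ζ) conj(B^ω_z(ζ)) ω(ζ) dA(ζ)`,
where `dA` is normalized area measure `dx dy / π`. -/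
def bProj (ω : ℝ → ℝ) (f : ℂ → ℂ) (z : ℂ) : ℂ :=
  (Real.pi : ℂ)⁻¹ * ∫ ζ in unitDisc, bInt ω f z ζ

/-- The weighted sup-norm `ess sup_{z ∈ 𝔻} |f(z)| v(|z|)`, valued in `ℝ≥0∞`. -/
def wSup (v : ℝ → ℝ) (f : ℂ → ℂ) : ℝ≥0∞ :=
  essSup (fun z => ENNReal.ofReal (‖f z‖ * v ‖z‖)) (volume.restrict unitDisc)

/-- `P_ω : L^∞_v → H^∞_v` is bounded: there is `C > 0` so that for every
`f ∈ L^∞_v` the defining integral converges absolutely at every point of `𝔻`,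
`P_ω f` is analytic on `𝔻`, and `‖P_ω f‖_{L^∞_v} ≤ C ‖f‖_{L^∞_v}`. -/
def ProjBddH (ω v : ℝ → ℝ) : Prop :=
  ∃ C : ℝ, 0 < C ∧ ∀ f : ℂ → ℂ,
    AEStronglyMeasurable f (volume.restrict unitDisc) → wSup v f < ⊤ →
    (∀ z ∈ unitDisc, IntegrableOn (bInt ω f z) unitDisc) ∧
    DifferentiableOn ℂ (bProj ω f) unitDisc ∧
    wSup v (bProj ω f) ≤ ENNReal.ofReal C * wSup v f

/-- `P_ω : L^∞_v → B^∞_v` is bounded: there is `C > 0` so that for every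
`f ∈ L^∞_v` the defining integral converges absolutely at every point of `𝔻`,
`P_ω f` is analytic on `𝔻`, and `‖P_ω f‖_{B^∞_v} ≤ C ‖f‖_{L^∞_v}`. -/
def ProjBddB (ω v : ℝ → ℝ) : Prop :=
  ∃ C : ℝ, 0 < C ∧ ∀ f : ℂ → ℂ,
    AEStronglyMeasurable f (volume.restrict unitDisc) → wSup v f < ⊤ →
    (∀ z ∈ unitDisc, IntegrableOn (bInt ω f z) unitDisc) ∧
    DifferentiableOn ℂ (bProj ω f) unitDisc ∧
    ∀ z ∈ unitDisc,
      ENNReal.ofReal ((1 - ‖z‖) * v ‖z‖ * ‖deriv (bProj ω f) z‖) ≤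
        ENNReal.ofReal C * wSup v f

/-- The moment condition `sup_{x ≥ 0} (ν_x / ω_{2x}) (ω/ν̂)_x < ∞`. -/
def MomCond (ω ν : ℝ → ℝ) : Prop :=
  ∃ C : ℝ, ∀ x : ℝ, 0 ≤ x →
    mom ν x / mom ω (2 * x) * mom (fun s => ω s / tl ν s) x ≤ C

/-- The tail condition `sup_{0 ≤ r < 1} (ν̂(r)/ω̂(r)) ∫_r^1 ω(s)/ν̂(s) ds < ∞`. -/
def TailCond (ω ν : ℝ → ℝ) : Prop :=
  ∃ C : ℝ, ∀ r ∈ Ico (0:ℝ) 1, tl ν r / tl ω r * tl (fun s => ω s / tl ν s) r ≤ C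

/-
Let `v` be continuous and positive on `[0, 1)`; the case `v = ν̂` is the one of interest. The test
functions `f_n(ζ) = (ζ/|ζ|)^n / v(|ζ|)` have weighted sup-norm at most `1`, and by orthogonality of
the monomials `P_ω f_n(z) = (ω/v)_{n+1} / ω_{2n+1} · z^n`, so boundedness of `P_ω` says
`|z|^n v(|z|) (ω/v)_{n+1} ≤ C ω_{2n+1}` throughout the disc. Choose `n + 1 = ⌊x⌋` and
`|z| = 1 - 1/x`: then `|z|^n ≥ 1/e`, the moments of `ω/v` decrease, and `ω_{2n+1} ≲ ω_{2x}` because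
the ratio `ω_{a+d} / ω_a` of moments is at least `ω_d / ω_0` for every `a ≥ 0`.
-/

open scoped ComplexConjugate

section Moments

variable {ω g : ℝ → ℝ} {a b x : ℝ}

lemma mom_eq_setIntegral (g : ℝ → ℝ) (x : ℝ) : mom g x = ∫ s in Ioo (0 : ℝ) 1, s ^ x * g s := by
  rw [mom, intervalIntegral.integral_of_le zero_le_one, integral_Ioc_eq_integral_Ioo]

lemma tl_eq_setIntegral (g : ℝ → ℝ) {r : ℝ} (hr : r ≤ 1) : tl g r = ∫ s in Ioo r 1, g s := by
  rw [tl, intervalIntegral.integral_of_le hr, integral_Ioc_eq_integral_Ioo]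

lemma mom_pow_mul (g : ℝ → ℝ) (n : ℕ) (x : ℝ) :
    mom (fun s => s ^ n * g s) x = mom g (n + x) := by
  rw [mom_eq_setIntegral, mom_eq_setIntegral]
  refine setIntegral_congr_fun measurableSet_Ioo fun s hs => ?_
  simp only [Real.rpow_add hs.1, Real.rpow_natCast]
  ring

lemma mom_nonneg (hg : ∀ s ∈ Ioo (0 : ℝ) 1, 0 ≤ g s) (x : ℝ) : 0 ≤ mom g x := by
  rw [mom_eq_setIntegral]
  exact setIntegral_nonneg measurableSet_Ioo fun s hs =>
    mul_nonneg (Real.rpow_nonneg hs.1.le x) (hg s hs)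

lemma integrableOn_rpow_mul_of_le (hg : IntegrableOn (fun s => s ^ a * g s) (Ioo 0 1))
    (hab : a ≤ b) : IntegrableOn (fun s => s ^ b * g s) (Ioo 0 1) := by
  have hbdd : IntegrableOn (fun s => s ^ (b - a) * (s ^ a * g s)) (Ioo 0 1) := by
    refine Integrable.bdd_mul (c := 1) hg
      (Real.continuous_rpow_const (sub_nonneg.2 hab)).aestronglyMeasurable ?_
    filter_upwards [ae_restrict_mem measurableSet_Ioo] with s hs
    rw [Real.norm_of_nonneg (Real.rpow_nonneg hs.1.le _)]
    exact Real.rpow_le_one hs.1.le hs.2.le (sub_nonneg.2 hab)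
  refine hbdd.congr_fun (fun s hs => ?_) measurableSet_Ioo
  simp only [← mul_assoc, ← Real.rpow_add hs.1, sub_add_cancel]

lemma mom_le_mom_of_le (hg : ∀ s ∈ Ioo (0 : ℝ) 1, 0 ≤ g s)
    (hint : IntegrableOn (fun s => s ^ a * g s) (Ioo 0 1)) (hab : a ≤ b) :
    mom g b ≤ mom g a := by
  rw [mom_eq_setIntegral, mom_eq_setIntegral]
  refine setIntegral_mono_on (integrableOn_rpow_mul_of_le hint hab) hint measurableSet_Ioo
    fun s hs => mul_le_mul_of_nonneg_right ?_ (hg s hs)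
  exact Real.rpow_le_rpow_of_exponent_ge hs.1 hs.2.le hab

lemma rpow_sub_mul_rpow_sub_nonneg {s c : ℝ} (hs : 0 ≤ s) (hc : 0 ≤ c) (ha : 0 ≤ a)
    (hb : 0 ≤ b) : 0 ≤ (s ^ a - c ^ a) * (s ^ b - c ^ b) := by
  rcases le_total s c with hsc | hcs
  · exact mul_nonneg_of_nonpos_of_nonpos (sub_nonpos.2 (Real.rpow_le_rpow hs hsc ha))
      (sub_nonpos.2 (Real.rpow_le_rpow hs hsc hb))
  · exact mul_nonneg (sub_nonneg.2 (Real.rpow_le_rpow hc hcs ha))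
      (sub_nonneg.2 (Real.rpow_le_rpow hc hcs hb))

namespace IsRadialWeight

lemma nonneg_of_mem_Ioo (hω : IsRadialWeight ω) : ∀ s ∈ Ioo (0 : ℝ) 1, 0 ≤ ω s :=
  fun s hs => hω.1 s (Ioo_subset_Ico_self hs)

lemma tl_pos (hω : IsRadialWeight ω) : ∀ r ∈ Ico (0 : ℝ) 1, 0 < tl ω r := hω.2.2

lemma integrableOn_rpow_mul (hω : IsRadialWeight ω) (hx : 0 ≤ x) :
    IntegrableOn (fun s => s ^ x * ω s) (Ioo 0 1) := by
  refine integrableOn_rpow_mul_of_le (a := 0) ?_ hx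
  simpa only [Real.rpow_zero, one_mul] using hω.2.1.mono_set Ioo_subset_Ico_self

lemma continuousOn_tl (hω : IsRadialWeight ω) : ContinuousOn (tl ω) (Icc 0 1) := by
  have hint : IntegrableOn ω (uIcc 0 1) := by
    rw [uIcc_of_le zero_le_one, integrableOn_Icc_iff_integrableOn_Ico]
    exact hω.2.1
  rw [← uIcc_of_le zero_le_one]
  exact intervalIntegral.continuousOn_primitive_interval_left hint

lemma rpow_mul_tl_le_mom (hω : IsRadialWeight ω) (hx : 0 ≤ x) {ρ : ℝ} (hρ : ρ ∈ Ico (0 : ℝ) 1) :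
    ρ ^ x * tl ω ρ ≤ mom ω x := by
  have hsub : Ioo ρ 1 ⊆ Ioo (0 : ℝ) 1 := Ioo_subset_Ioo_left hρ.1
  have hint := hω.integrableOn_rpow_mul hx
  have hω1 : IntegrableOn ω (Ioo ρ 1) := hω.2.1.mono_set (hsub.trans Ioo_subset_Ico_self)
  rw [mom_eq_setIntegral, tl_eq_setIntegral ω hρ.2.le, ← integral_const_mul]
  calc ∫ s in Ioo ρ 1, ρ ^ x * ω s ≤ ∫ s in Ioo ρ 1, s ^ x * ω s :=
        setIntegral_mono_on (hω1.const_mul _) (hint.mono_set hsub) measurableSet_Ioo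
          fun s hs => mul_le_mul_of_nonneg_right (Real.rpow_le_rpow hρ.1 hs.1.le hx)
            (hω.nonneg_of_mem_Ioo s (hsub hs))
    _ ≤ ∫ s in Ioo 0 1, s ^ x * ω s := by
        refine setIntegral_mono_set hint ?_ hsub.eventuallyLE
        filter_upwards [ae_restrict_mem measurableSet_Ioo] with s hs
        exact mul_nonneg (Real.rpow_nonneg hs.1.le x) (hω.nonneg_of_mem_Ioo s hs)

lemma mom_pos (hω : IsRadialWeight ω) (hx : 0 ≤ x) : 0 < mom ω x := by
  have hhalf : (1 / 2 : ℝ) ∈ Ico (0 : ℝ) 1 := by norm_num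
  exact (mul_pos (by positivity) (hω.tl_pos _ hhalf)).trans_le (hω.rpow_mul_tl_le_mom hx hhalf)

/- Chebyshev's inequality for the increasing functions `s ^ a` and `s ^ d`: with `c ^ d` the
`ω`-mean of `s ^ d`, integrate `(s ^ a - c ^ a) * (s ^ d - c ^ d) ≥ 0` against `ω`. -/
lemma mom_mul_mom_le_mom_zero_mul_mom_add (hω : IsRadialWeight ω) (ha : 0 ≤ a) {d : ℝ}
    (hd : 0 < d) : mom ω a * mom ω d ≤ mom ω 0 * mom ω (a + d) := by
  have hm0 := hω.mom_pos le_rfl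
  have hmean : 0 ≤ mom ω d / mom ω 0 := div_nonneg (hω.mom_pos hd.le).le hm0.le
  obtain ⟨c, hc, hcd⟩ : ∃ c : ℝ, 0 ≤ c ∧ c ^ d = mom ω d / mom ω 0 :=
    ⟨_, Real.rpow_nonneg hmean d⁻¹, Real.rpow_inv_rpow hmean hd.ne'⟩
  have hint {y : ℝ} (hy : 0 ≤ y) (k : ℝ) :
      IntegrableOn (fun s => k * (s ^ y * ω s)) (Ioo 0 1) :=
    (hω.integrableOn_rpow_mul hy).const_mul k
  have hpoint : ∀ s ∈ Ioo (0 : ℝ) 1,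
      c ^ d * (s ^ a * ω s) + c ^ a * (s ^ d * ω s) ≤
        1 * (s ^ (a + d) * ω s) + c ^ a * c ^ d * (s ^ (0 : ℝ) * ω s) := fun s hs => by
    rw [Real.rpow_add hs.1, Real.rpow_zero]
    linear_combination mul_nonneg (rpow_sub_mul_rpow_sub_nonneg hs.1.le hc ha hd.le)
      (hω.nonneg_of_mem_Ioo s hs)
  have hmom : c ^ d * mom ω a + c ^ a * mom ω d ≤
      1 * mom ω (a + d) + c ^ a * c ^ d * mom ω 0 := by
    simp only [mom_eq_setIntegral, ← integral_const_mul]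
    rw [← integral_add (hint ha _) (hint hd.le _),
      ← integral_add (hint (by positivity) _) (hint le_rfl _)]
    exact setIntegral_mono_on ((hint ha _).add (hint hd.le _))
      ((hint (by positivity) _).add (hint le_rfl _)) measurableSet_Ioo hpoint
  have hcancel : c ^ a * c ^ d * mom ω 0 = c ^ a * mom ω d := by
    rw [hcd, mul_assoc, div_mul_cancel₀ _ hm0.ne']
  have hmain : mom ω d / mom ω 0 * mom ω a ≤ mom ω (a + d) := by
    rw [← hcd]
    linarith
  rwa [div_mul_eq_mul_div, div_le_iff₀' hm0, mul_comm (mom ω d)] at hmain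

lemma exists_mom_le_mul_mom (hω : IsRadialWeight ω) {d : ℝ} (hd : 0 < d) :
    ∃ K : ℝ, 0 < K ∧ ∀ a b : ℝ, 0 ≤ a → a ≤ b → b ≤ a + d → mom ω a ≤ K * mom ω b := by
  have hmd := hω.mom_pos hd.le
  have hm0 := hω.mom_pos le_rfl
  refine ⟨mom ω 0 / mom ω d, div_pos hm0 hmd, fun a b ha hab hbd => ?_⟩
  calc mom ω a ≤ mom ω 0 / mom ω d * mom ω (a + d) := by
        rw [div_mul_eq_mul_div, le_div_iff₀ hmd]
        exact hω.mom_mul_mom_le_mom_zero_mul_mom_add ha hd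
    _ ≤ mom ω 0 / mom ω d * mom ω b := by
        gcongr
        exact mom_le_mom_of_le hω.nonneg_of_mem_Ioo
          (hω.integrableOn_rpow_mul (ha.trans hab)) hbd

lemma summable_pow_div_mom (hω : IsRadialWeight ω) {t : ℝ} (ht0 : 0 ≤ t) (ht1 : t < 1) :
    Summable fun k : ℕ => t ^ k / (2 * mom ω (2 * (k : ℝ) + 1)) := by
  obtain ⟨ρ, hρ0, hρ1, htρ⟩ : ∃ ρ : ℝ, 0 < ρ ∧ ρ < 1 ∧ t < ρ ^ 2 :=
    ⟨(1 + t) / 2, by positivity, by linarith, by nlinarith [sq_pos_of_pos (sub_pos.2 ht1)]⟩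
  have htl := hω.tl_pos ρ ⟨hρ0.le, hρ1⟩
  have hgeom := summable_geometric_of_lt_one (by positivity) ((div_lt_one (by positivity)).2 htρ)
  refine Summable.of_nonneg_of_le (fun k => ?_) (fun k => ?_)
    (hgeom.mul_right (1 / (2 * (ρ * tl ω ρ))))
  · have := hω.mom_pos (x := 2 * (k : ℝ) + 1) (by positivity)
    positivity
  · have hpow : ρ ^ (2 * (k : ℝ) + 1) = (ρ ^ 2) ^ k * ρ := by
      rw [Real.rpow_add hρ0, Real.rpow_one, Real.rpow_mul hρ0.le, Real.rpow_natCast,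
        Real.rpow_two]
    have hmom := hω.rpow_mul_tl_le_mom (x := 2 * (k : ℝ) + 1) (by positivity) ⟨hρ0.le, hρ1⟩
    rw [hpow] at hmom
    calc t ^ k / (2 * mom ω (2 * (k : ℝ) + 1)) ≤ t ^ k / (2 * ((ρ ^ 2) ^ k * ρ * tl ω ρ)) := by
          gcongr
      _ = (t / ρ ^ 2) ^ k * (1 / (2 * (ρ * tl ω ρ))) := by
          rw [div_pow]
          field_simp

end IsRadialWeight

end Moments

section UnitDisc

variable {g v : ℝ → ℝ} {ζ : ℂ}

lemma isOpen_unitDisc : IsOpen unitDisc := Metric.isOpen_ball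

lemma measurableSet_unitDisc : MeasurableSet unitDisc := isOpen_unitDisc.measurableSet

lemma mem_unitDisc : ζ ∈ unitDisc ↔ ‖ζ‖ < 1 := mem_ball_zero_iff

lemma norm_mem_Ico_of_mem_unitDisc (hζ : ζ ∈ unitDisc) : ‖ζ‖ ∈ Ico (0 : ℝ) 1 :=
  ⟨norm_nonneg ζ, mem_unitDisc.1 hζ⟩

lemma continuousOn_unitDisc_comp_norm (hg : ContinuousOn g (Ico 0 1)) :
    ContinuousOn (fun ζ : ℂ => g ‖ζ‖) unitDisc :=
  hg.comp continuous_norm.continuousOn fun _ => norm_mem_Ico_of_mem_unitDisc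

lemma integrableOn_unitDisc_comp_norm_iff :
    IntegrableOn (fun ζ : ℂ => g ‖ζ‖) unitDisc ↔
      IntegrableOn (fun s => s ^ (1 : ℝ) * g s) (Ioo 0 1) := by
  simp only [unitDisc, integrableOn_fun_norm_addHaar, finrank_real_complex, Nat.add_one_sub_one,
    pow_one, smul_eq_mul, Real.rpow_one]

lemma setIntegral_unitDisc_comp_norm (g : ℝ → ℝ) :
    ∫ ζ in unitDisc, g ‖ζ‖ = 2 * Real.pi * mom g 1 := by
  have hdisc : ∫ ζ in unitDisc, g ‖ζ‖ = ∫ ζ : ℂ, (Iio (1 : ℝ)).indicator g ‖ζ‖ := by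
    rw [← integral_indicator measurableSet_unitDisc]
    simp only [indicator, mem_unitDisc, mem_Iio]
  have hline : ∫ s in Ioi (0 : ℝ), s ^ (2 - 1) • (Iio (1 : ℝ)).indicator g s = mom g 1 := by
    rw [mom_eq_setIntegral, ← Ioi_inter_Iio, ← setIntegral_indicator measurableSet_Iio]
    simp only [indicator_mul_right, Nat.add_one_sub_one, pow_one, smul_eq_mul, Real.rpow_one]
  rw [hdisc, integral_fun_norm_addHaar volume, finrank_real_complex, hline]
  simp [Measure.real, Complex.volume_ball, mul_assoc]

lemma setIntegral_unitDisc_comp_rotation {E : Type*} [NormedAddCommGroup E] [NormedSpace ℝ E]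
    (u : Circle) (F : ℂ → E) :
    ∫ ζ in unitDisc, F (u * ζ) = ∫ ζ in unitDisc, F ζ := by
  have hpre : rotation u ⁻¹' unitDisc = unitDisc := by
    ext ζ
    simp only [mem_preimage, mem_unitDisc, LinearIsometryEquiv.norm_map]
  simpa only [hpre, rotation_apply] using (rotation u).measurePreserving.setIntegral_preimage_emb
    (rotation u).toHomeomorph.measurableEmbedding F unitDisc

lemma setIntegral_unitDisc_eq_zero_of_rotation {F : ℂ → ℂ} {c : ℂ} (hc : c ≠ 1) (u : Circle)
    (hF : ∀ ζ, F (u * ζ) = c * F ζ) : ∫ ζ in unitDisc, F ζ = 0 := by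
  have hinv := setIntegral_unitDisc_comp_rotation u F
  simp only [hF, integral_const_mul] at hinv
  by_contra hne
  exact hc ((mul_eq_right₀ hne).1 hinv)

lemma norm_mul_le_of_wSup_le {f : ℂ → ℂ} {C : ℝ} (hC : 0 ≤ C) (hv : ContinuousOn v (Ico 0 1))
    (hf : ContinuousOn f unitDisc) (h : wSup v f ≤ ENNReal.ofReal C) (hζ : ζ ∈ unitDisc) :
    ‖f ζ‖ * v ‖ζ‖ ≤ C := by
  have hcont : ContinuousOn (fun ζ => ‖f ζ‖ * v ‖ζ‖) unitDisc :=
    hf.norm.mul (continuousOn_unitDisc_comp_norm hv)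
  have hae : (fun ζ => max (‖f ζ‖ * v ‖ζ‖) C) =ᵐ[volume.restrict unitDisc] fun _ => C := by
    filter_upwards [ENNReal.ae_le_essSup (μ := volume.restrict unitDisc)
      fun ζ => ENNReal.ofReal (‖f ζ‖ * v ‖ζ‖)] with ζ hle
    exact max_eq_right ((ENNReal.ofReal_le_ofReal_iff hC).1 (hle.trans h))
  exact max_eq_right_iff.1 <| Measure.eqOn_open_of_ae_eq hae isOpen_unitDisc
    (hcont.sup continuousOn_const) continuousOn_const hζ

end UnitDisc

/-- The function `ζ = s e^{iθ} ↦ e^{inθ} h(s)` of angular frequency `n` and radial profile `h`.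
At the origin, a null set, `ζ / ‖ζ‖` is `0`. -/
def angularMode (n : ℕ) (h : ℝ → ℝ) (ζ : ℂ) : ℂ := (ζ / ‖ζ‖) ^ n * h ‖ζ‖

section AngularMode

variable {h : ℝ → ℝ} {ζ : ℂ}

lemma norm_angularMode_le (n : ℕ) (h : ℝ → ℝ) (ζ : ℂ) : ‖angularMode n h ζ‖ ≤ |h ‖ζ‖| := by
  have hphase : ‖ζ / (‖ζ‖ : ℂ)‖ ≤ 1 := by
    rw [norm_div, norm_real, norm_norm]
    exact div_self_le_one _
  rw [angularMode, norm_mul, norm_pow, norm_real, Real.norm_eq_abs]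
  exact mul_le_of_le_one_left (abs_nonneg _) (pow_le_one₀ (norm_nonneg _) hphase)

lemma aestronglyMeasurable_angularMode (n : ℕ)
    (hh : AEStronglyMeasurable (fun ζ : ℂ => h ‖ζ‖) (volume.restrict unitDisc)) :
    AEStronglyMeasurable (angularMode n h) (volume.restrict unitDisc) := by
  have hphase : Measurable fun ζ : ℂ => (ζ / ‖ζ‖) ^ n := by fun_prop
  exact hphase.aestronglyMeasurable.mul (continuous_ofReal.comp_aestronglyMeasurable hh)

lemma angularMode_rotation (u : Circle) (n : ℕ) (h : ℝ → ℝ) (ζ : ℂ) :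
    angularMode n h (u * ζ) = u ^ n * angularMode n h ζ := by
  simp only [angularMode, norm_mul, Circle.norm_coe, one_mul, mul_div_assoc, mul_pow, mul_assoc]

lemma norm_conj_pow_mul_angularMode_le (n k : ℕ) (h : ℝ → ℝ) (hζ : ζ ∈ unitDisc) :
    ‖conj ζ ^ k * angularMode n h ζ‖ ≤ |h ‖ζ‖| := by
  rw [norm_mul, norm_pow, RCLike.norm_conj]
  exact (mul_le_of_le_one_left (norm_nonneg _)
    (pow_le_one₀ (norm_nonneg ζ) (mem_unitDisc.1 hζ).le)).trans (norm_angularMode_le n h ζ)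

lemma integrableOn_conj_pow_mul_angularMode (n k : ℕ)
    (hh : IntegrableOn (fun ζ : ℂ => h ‖ζ‖) unitDisc) :
    IntegrableOn (fun ζ => conj ζ ^ k * angularMode n h ζ) unitDisc := by
  have hconj : Measurable fun ζ : ℂ => conj ζ ^ k := by fun_prop
  refine Integrable.mono hh (hconj.aestronglyMeasurable.mul
    (aestronglyMeasurable_angularMode n hh.aestronglyMeasurable)) ?_
  filter_upwards [ae_restrict_mem measurableSet_unitDisc] with ζ hζ
  exact norm_conj_pow_mul_angularMode_le n k h hζ

lemma exists_circle_conj_pow_mul_pow_eq_neg_one {n k : ℕ} (hnk : k ≠ n) :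
    ∃ u : Circle, conj (u : ℂ) ^ k * (u : ℂ) ^ n = -1 := by
  have hd : (n : ℂ) - k ≠ 0 := sub_ne_zero.2 (Nat.cast_injective.ne hnk.symm)
  refine ⟨Circle.exp (Real.pi / (n - k)), ?_⟩
  rw [← Circle.coe_inv_eq_conj, ← Circle.exp_neg, Circle.coe_exp, Circle.coe_exp,
    ← exp_nat_mul, ← exp_nat_mul, ← exp_add, ← exp_pi_mul_I]
  congr 1
  push_cast
  field_simp
  ring

lemma setIntegral_conj_pow_mul_angularMode_of_ne (h : ℝ → ℝ) {n k : ℕ} (hnk : k ≠ n) :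
    ∫ ζ in unitDisc, conj ζ ^ k * angularMode n h ζ = 0 := by
  obtain ⟨u, hu⟩ := exists_circle_conj_pow_mul_pow_eq_neg_one hnk
  refine setIntegral_unitDisc_eq_zero_of_rotation (c := -1) (by norm_num) u fun ζ => ?_
  rw [angularMode_rotation, map_mul, mul_pow, ← hu]
  ring

lemma conj_pow_mul_angularMode_self (n : ℕ) (h : ℝ → ℝ) (ζ : ℂ) :
    conj ζ ^ n * angularMode n h ζ = ((‖ζ‖ ^ n * h ‖ζ‖ : ℝ) : ℂ) := by
  have hphase : conj ζ * (ζ / ‖ζ‖) = ‖ζ‖ := by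
    rw [← mul_div_assoc, conj_mul', sq, mul_self_div_self]
  rw [angularMode, ← mul_assoc, ← mul_pow, hphase]
  push_cast
  rfl

lemma setIntegral_conj_pow_mul_angularMode_self (n : ℕ) (h : ℝ → ℝ) :
    ∫ ζ in unitDisc, conj ζ ^ n * angularMode n h ζ = ((2 * Real.pi * mom h (n + 1) : ℝ) : ℂ) := by
  simp only [conj_pow_mul_angularMode_self]
  rw [integral_complex_ofReal, setIntegral_unitDisc_comp_norm fun s => s ^ n * h s, mom_pow_mul]

end AngularMode

section Projection

variable {ω h : ℝ → ℝ} {z : ℂ}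

lemma bInt_zero (ω : ℝ → ℝ) (f : ℂ → ℂ) :
    bInt ω f 0 = fun ζ => f ζ * ω ‖ζ‖ * ((2 * mom ω 1 : ℝ) : ℂ)⁻¹ := by
  ext ζ
  have hker : bKer ω 0 ζ = ((2 * mom ω 1 : ℝ) : ℂ)⁻¹ := by
    rw [bKer, tsum_eq_single 0 fun n hn => by simp [hn]]
    simp
  rw [bInt, hker, map_inv₀, conj_ofReal]
  ring

lemma bInt_angularMode_eq_tsum (ω h : ℝ → ℝ) (n : ℕ) (z ζ : ℂ) :
    bInt ω (angularMode n h) z ζ =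
      ∑' k : ℕ, z ^ k / ((2 * mom ω (2 * k + 1) : ℝ) : ℂ) *
        (conj ζ ^ k * angularMode n (fun s => ω s * h s) ζ) := by
  rw [bInt, bKer, conj_tsum, ← tsum_mul_left, ← tsum_mul_right]
  refine tsum_congr fun k => ?_
  simp only [angularMode, map_div₀, map_pow, map_mul, conj_conj, conj_ofReal, ofReal_mul]
  ring

lemma summable_integral_norm_bInt_angularMode (hω : IsRadialWeight ω)
    (hint : IntegrableOn (fun ζ : ℂ => h ‖ζ‖) unitDisc) (n : ℕ) (hz : z ∈ unitDisc) :
    Summable fun k : ℕ => ∫ ζ in unitDisc,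
      ‖z ^ k / ((2 * mom ω (2 * k + 1) : ℝ) : ℂ) * (conj ζ ^ k * angularMode n h ζ)‖ := by
  refine Summable.of_nonneg_of_le (fun k => by positivity) (fun k => ?_)
    ((hω.summable_pow_div_mom (norm_nonneg z) (mem_unitDisc.1 hz)).mul_right
      (∫ ζ in unitDisc, |h ‖ζ‖|))
  have hmom := hω.mom_pos (x := 2 * k + 1) (by positivity)
  have hcoeff : ‖z ^ k / ((2 * mom ω (2 * k + 1) : ℝ) : ℂ)‖ =
      ‖z‖ ^ k / (2 * mom ω (2 * k + 1)) := by
    rw [norm_div, norm_pow, norm_real, Real.norm_of_nonneg (by positivity)]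
  simp only [norm_mul _ (_ * _), hcoeff, integral_const_mul]
  exact mul_le_mul_of_nonneg_left (setIntegral_mono_on
    (integrableOn_conj_pow_mul_angularMode n k hint).norm hint.abs measurableSet_unitDisc
    fun ζ hζ => norm_conj_pow_mul_angularMode_le n k h hζ) (by positivity)

lemma bProj_angularMode (hω : IsRadialWeight ω)
    (hint : IntegrableOn (fun ζ : ℂ => ω ‖ζ‖ * h ‖ζ‖) unitDisc) (n : ℕ) (hz : z ∈ unitDisc) :
    bProj ω (angularMode n h) z =
      z ^ n * ((mom (fun s => ω s * h s) (n + 1) / mom ω (2 * n + 1) : ℝ) : ℂ) := by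
  have hswap := integral_tsum_of_summable_integral_norm
    (fun k => (integrableOn_conj_pow_mul_angularMode (h := fun s => ω s * h s)
      n k hint).const_mul _)
    (summable_integral_norm_bInt_angularMode hω hint n hz)
  simp only [bProj, bInt_angularMode_eq_tsum]
  rw [← hswap, tsum_eq_single n fun k hk => by
    rw [integral_const_mul, setIntegral_conj_pow_mul_angularMode_of_ne _ hk, mul_zero],
    integral_const_mul, setIntegral_conj_pow_mul_angularMode_self]
  have hpi : (Real.pi : ℂ) ≠ 0 := ofReal_ne_zero.2 Real.pi_ne_zero
  have hmom : (mom ω (2 * n + 1) : ℂ) ≠ 0 := ofReal_ne_zero.2 (hω.mom_pos (by positivity)).ne'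
  push_cast
  field_simp

end Projection

section TestFunction

variable {ω v : ℝ → ℝ}

lemma aestronglyMeasurable_angularMode_inv (hv : ContinuousOn v (Ico 0 1))
    (hpos : ∀ r ∈ Ico (0 : ℝ) 1, 0 < v r) (n : ℕ) :
    AEStronglyMeasurable (angularMode n v⁻¹) (volume.restrict unitDisc) :=
  aestronglyMeasurable_angularMode n <| (continuousOn_unitDisc_comp_norm
    (hv.inv₀ fun r hr => (hpos r hr).ne')).aestronglyMeasurable measurableSet_unitDisc

lemma wSup_angularMode_inv_le_one (hpos : ∀ r ∈ Ico (0 : ℝ) 1, 0 < v r) (n : ℕ) :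
    wSup v (angularMode n v⁻¹) ≤ 1 := by
  refine essSup_le_of_ae_le _ ?_
  filter_upwards [ae_restrict_mem measurableSet_unitDisc] with ζ hζ
  have hvζ := hpos _ (norm_mem_Ico_of_mem_unitDisc hζ)
  rw [ENNReal.ofReal_le_one]
  calc ‖angularMode n v⁻¹ ζ‖ * v ‖ζ‖ ≤ |v⁻¹ ‖ζ‖| * v ‖ζ‖ := by
        gcongr
        exact norm_angularMode_le n v⁻¹ ζ
    _ = 1 := by rw [Pi.inv_apply, abs_of_pos (inv_pos.2 hvζ), inv_mul_cancel₀ hvζ.ne']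

lemma integrableOn_mul_inv_of_projBddH (hω : IsRadialWeight ω) (hv : ContinuousOn v (Ico 0 1))
    (hpos : ∀ r ∈ Ico (0 : ℝ) 1, 0 < v r) (hb : ProjBddH ω v) :
    IntegrableOn (fun ζ : ℂ => ω ‖ζ‖ * v⁻¹ ‖ζ‖) unitDisc := by
  obtain ⟨_, _, hproj⟩ := hb
  have hint := (hproj _ (aestronglyMeasurable_angularMode_inv hv hpos 0)
    ((wSup_angularMode_inv_le_one hpos 0).trans_lt ENNReal.one_lt_top)).1 0
    (mem_unitDisc.2 (by simp))
  have hm1 : ((2 * mom ω 1 : ℝ) : ℂ)⁻¹ ≠ 0 :=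
    inv_ne_zero (ofReal_ne_zero.2 (mul_pos two_pos (hω.mom_pos zero_le_one)).ne')
  rw [bInt_zero] at hint
  have hre := ((integrable_mul_const_iff hm1.isUnit _).1 hint).re
  refine hre.congr (ae_of_all _ fun ζ => ?_)
  simp [angularMode, mul_comm]

lemma exists_pow_mul_mom_le_of_projBddH (hω : IsRadialWeight ω) (hv : ContinuousOn v (Ico 0 1))
    (hpos : ∀ r ∈ Ico (0 : ℝ) 1, 0 < v r) (hb : ProjBddH ω v) :
    ∃ C : ℝ, 0 < C ∧ ∀ n : ℕ, ∀ r ∈ Ico (0 : ℝ) 1,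
      r ^ n * v r * mom (fun s => ω s / v s) (n + 1) ≤ C * mom ω (2 * n + 1) := by
  have hint := integrableOn_mul_inv_of_projBddH hω hv hpos hb
  obtain ⟨C, hC, hproj⟩ := hb
  refine ⟨C, hC, fun n r hr => ?_⟩
  have hsup := wSup_angularMode_inv_le_one hpos n
  obtain ⟨-, hdiff, hbound⟩ := hproj _ (aestronglyMeasurable_angularMode_inv hv hpos n)
    (hsup.trans_lt ENNReal.one_lt_top)
  have hnorm : ‖(r : ℂ)‖ = r := by rw [norm_real, Real.norm_of_nonneg hr.1]
  have hrD : (r : ℂ) ∈ unitDisc := mem_unitDisc.2 (hnorm.trans_lt hr.2)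
  have hle := norm_mul_le_of_wSup_le hC.le hv hdiff.continuousOn
    (hbound.trans (mul_le_of_le_one_right' hsup)) hrD
  rw [bProj_angularMode hω hint n hrD, norm_mul, norm_pow, hnorm, norm_real] at hle
  simp only [Pi.inv_apply, ← div_eq_mul_inv] at hle
  have hvr := hpos r hr
  have hr0 := hr.1
  rw [← div_le_iff₀ (hω.mom_pos (by positivity))]
  calc r ^ n * v r * mom (fun s => ω s / v s) (n + 1) / mom ω (2 * n + 1)
      = r ^ n * (mom (fun s => ω s / v s) (n + 1) / mom ω (2 * n + 1)) * v r := by ring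
    _ ≤ r ^ n * ‖mom (fun s => ω s / v s) (n + 1) / mom ω (2 * n + 1)‖ * v r := by
        gcongr
        exact Real.le_norm_self _
    _ ≤ C := hle

lemma IsRadialWeight.div_nonneg_of_mem_Ioo (hω : IsRadialWeight ω)
    (hpos : ∀ r ∈ Ico (0 : ℝ) 1, 0 < v r) : ∀ s ∈ Ioo (0 : ℝ) 1, 0 ≤ ω s / v s :=
  fun s hs => div_nonneg (hω.nonneg_of_mem_Ioo s hs) (hpos s (Ioo_subset_Ico_self hs)).le

lemma mom_div_le_mom_div_of_projBddH (hω : IsRadialWeight ω) (hv : ContinuousOn v (Ico 0 1))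
    (hpos : ∀ r ∈ Ico (0 : ℝ) 1, 0 < v r) (hb : ProjBddH ω v) {a b : ℝ} (ha : 1 ≤ a)
    (hab : a ≤ b) : mom (fun s => ω s / v s) b ≤ mom (fun s => ω s / v s) a := by
  have hint : IntegrableOn (fun s => s ^ (1 : ℝ) * (ω s / v s)) (Ioo 0 1) := by
    have hdisc := integrableOn_mul_inv_of_projBddH hω hv hpos hb
    simp only [Pi.inv_apply, ← div_eq_mul_inv] at hdisc
    exact (integrableOn_unitDisc_comp_norm_iff (g := fun s => ω s / v s)).1 hdisc
  exact mom_le_mom_of_le (hω.div_nonneg_of_mem_Ioo hpos) (integrableOn_rpow_mul_of_le hint ha) hab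

end TestFunction

lemma exp_neg_one_le_one_sub_inv_pow (n : ℕ) {x : ℝ} (hx : n + 1 ≤ x) :
    Real.exp (-1) ≤ (1 - 1 / x) ^ n := by
  rcases n.eq_zero_or_pos with rfl | hn
  · simp
  have hn0 : (0 : ℝ) < n := Nat.cast_pos.2 hn
  have hx0 : 0 < x := by linarith
  have hr : 0 < 1 - 1 / x := by rw [sub_pos, div_lt_one hx0]; linarith
  have hlog : -(1 / (n : ℝ)) ≤ Real.log (1 - 1 / x) :=
    calc -(1 / (n : ℝ)) ≤ -(1 / (x - 1)) :=
          neg_le_neg (one_div_le_one_div_of_le hn0 (by linarith))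
      _ = 1 - (1 - 1 / x)⁻¹ := by
          have hx1 : x - 1 ≠ 0 := by linarith
          field_simp
          ring
      _ ≤ Real.log (1 - 1 / x) := Real.one_sub_inv_le_log_of_pos hr
  rw [← Real.exp_log (pow_pos hr n), Real.exp_le_exp, Real.log_pow]
  calc (-1 : ℝ) = n * -(1 / (n : ℝ)) := by field_simp
    _ ≤ n * Real.log (1 - 1 / x) := by gcongr

theorem stmt14_general (ω v : ℝ → ℝ) (hω : IsRadialWeight ω) (hv : ContinuousOn v (Ico 0 1))
    (hpos : ∀ r ∈ Ico (0 : ℝ) 1, 0 < v r) (hb : ProjBddH ω v) :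
    ∃ C : ℝ, 0 < C ∧ ∀ x : ℝ, 1 ≤ x →
      mom (fun s => ω s / v s) x ≤ C * mom ω (2 * x) / v (1 - 1 / x) := by
  obtain ⟨C, hC, hbound⟩ := exists_pow_mul_mom_le_of_projBddH hω hv hpos hb
  obtain ⟨K, hK, hshift⟩ := hω.exists_mom_le_mul_mom three_pos
  refine ⟨Real.exp 1 * (C * K), by positivity, fun x hx => ?_⟩
  obtain ⟨n, hnx, hxn⟩ : ∃ n : ℕ, (n : ℝ) + 1 ≤ x ∧ x ≤ n + 2 := by
    refine ⟨⌊x - 1⌋₊, ?_, ?_⟩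
    · linarith [Nat.floor_le (sub_nonneg.2 hx)]
    · linarith [Nat.lt_floor_add_one (x - 1)]
  have hr : 1 - 1 / x ∈ Ico (0 : ℝ) 1 :=
    ⟨sub_nonneg.2 ((div_le_one (by linarith)).2 hx), sub_lt_self 1 (by positivity)⟩
  have hpow := exp_neg_one_le_one_sub_inv_pow n hnx
  have hanti := mom_div_le_mom_div_of_projBddH hω hv hpos hb (by simp) hnx
  have hM := mom_nonneg (hω.div_nonneg_of_mem_Ioo hpos) x
  set r := 1 - 1 / x
  have hvr := hpos r hr
  rw [le_div_iff₀ hvr]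
  calc mom (fun s => ω s / v s) x * v r
      = Real.exp 1 * (Real.exp (-1) * v r * mom (fun s => ω s / v s) x) := by
        rw [Real.exp_neg]; field_simp
    _ ≤ Real.exp 1 * (r ^ n * v r * mom (fun s => ω s / v s) (n + 1)) := by
        have := pow_nonneg hr.1 n
        gcongr
    _ ≤ Real.exp 1 * (C * mom ω (2 * n + 1)) :=
        mul_le_mul_of_nonneg_left (hbound n r hr) (Real.exp_pos 1).le
    _ ≤ Real.exp 1 * (C * (K * mom ω (2 * x))) := by
        gcongr
        exact hshift _ _ (by positivity) (by linarith) (by linarith)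
    _ = Real.exp 1 * (C * K) * mom ω (2 * x) := by ring

/-- Proposition 3.3: if `P_ω : L^∞_ν̂ → H^∞_ν̂` is bounded, then
`(ω/ν̂)_x ≤ C ω_{2x} / ν̂(1 - 1/x)` for all `x ≥ 1`. -/
theorem stmt14 (ω ν : ℝ → ℝ) (hω : IsRadialWeight ω) (hν : IsRadialWeight ν)
    (hb : ProjBddH ω (tl ν)) :
    ∃ C : ℝ, 0 < C ∧ ∀ x : ℝ, 1 ≤ x →
      mom (fun s => ω s / tl ν s) x ≤ C * mom ω (2 * x) / tl ν (1 - 1 / x) :=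
  stmt14_general ω (tl ν) hω (hν.continuousOn_tl.mono Ico_subset_Icc_self) hν.tl_pos hb
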